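/- GL_r(2) is a left module algebra over the Hopf algebra H = ℂ[f, f^{-1}] (group algebra of ℤ, with f group-like) under the action f ▷ a = a, f ▷ b = s b, f ▷ c = s^{-1} c, f ▷ d = d: the action satisfies f ▷ (xy) = (f ▷ x)(f ▷ y) and f ▷ 1 = 1 for all x, y ∈ GL_r(2), and the cross-product algebra GL_r(2) ⋊ H is then precisely A_{r,s}. -/

import Mathlib

open scoped TensorProduct

noncomputable section

/-- Generators of the cross-product algebra `A_{r,s}`. -/
inductive Gen : Type
  | a | b | c | d | f | fi
deriving DecidableEq

/-- The free algebra on the generators. -/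
abbrev FA : Type := FreeAlgebra ℂ Gen

/-- The generators inside the free algebra. -/
def X (g : Gen) : FA := FreeAlgebra.ι ℂ g

/-- The defining relations of `A_{r,s}`. -/
inductive ArsRel (r s : ℂ) : FA → FA → Prop
  | ab : ArsRel r s (X .a * X .b) (r⁻¹ • (X .b * X .a))
  | bd : ArsRel r s (X .b * X .d) (r⁻¹ • (X .d * X .b))
  | ac : ArsRel r s (X .a * X .c) (r⁻¹ • (X .c * X .a))
  | cd : ArsRel r s (X .c * X .d) (r⁻¹ • (X .d * X .c))
  | bc : ArsRel r s (X .b * X .c) (X .c * X .b)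
  | ad : ArsRel r s (X .a * X .d - X .d * X .a) ((r⁻¹ - r) • (X .b * X .c))
  | af : ArsRel r s (X .a * X .f) (X .f * X .a)
  | cf : ArsRel r s (X .c * X .f) (s • (X .f * X .c))
  | bf : ArsRel r s (X .b * X .f) (s⁻¹ • (X .f * X .b))
  | df : ArsRel r s (X .d * X .f) (X .f * X .d)
  | ffi : ArsRel r s (X .f * X .fi) 1
  | fif : ArsRel r s (X .fi * X .f) 1

/-- The cross-product quantum algebra `A_{r,s}`. -/
abbrev Ars (r s : ℂ) : Type := RingQuot (ArsRel r s)

/-- The generators of `A_{r,s}`. -/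
def gen (r s : ℂ) (g : Gen) : Ars r s := RingQuot.mkAlgHom ℂ (ArsRel r s) (X g)

/-- Generators of `GL_r(2)`. -/
inductive Gen4 : Type
  | a | b | c | d
deriving DecidableEq

abbrev FB : Type := FreeAlgebra ℂ Gen4

def Y (g : Gen4) : FB := FreeAlgebra.ι ℂ g

/-- The defining relations of `GL_r(2)`. -/
inductive GLRel (r : ℂ) : FB → FB → Prop
  | ab : GLRel r (Y .a * Y .b) (r⁻¹ • (Y .b * Y .a))
  | bd : GLRel r (Y .b * Y .d) (r⁻¹ • (Y .d * Y .b))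
  | ac : GLRel r (Y .a * Y .c) (r⁻¹ • (Y .c * Y .a))
  | cd : GLRel r (Y .c * Y .d) (r⁻¹ • (Y .d * Y .c))
  | bc : GLRel r (Y .b * Y .c) (Y .c * Y .b)
  | ad : GLRel r (Y .a * Y .d - Y .d * Y .a) ((r⁻¹ - r) • (Y .b * Y .c))

/-- The quantum group(-algebra) `GL_r(2)`. -/
abbrev GL2 (r : ℂ) : Type := RingQuot (GLRel r)

/-- The generators of `GL_r(2)`. -/
def gen4 (r : ℂ) (g : Gen4) : GL2 r := RingQuot.mkAlgHom ℂ (GLRel r) (Y g)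

/-!
The cross product `GL_r(2) ⋊ ℂ[f, f⁻¹]` is the skew Laurent polynomial algebra over `GL_r(2)` whose
variable acts by conjugation as the automorphism `f ▷ -`. A morphism out of it is a morphism `φ`
out of `GL_r(2)`, that is a quadruple satisfying the quantum matrix relations, together with a unit
`u` such that `u φ(x) = φ(f ▷ x) u`; it suffices to require this for the four generators. These are
exactly the data of a morphism out of `A_{r,s}`, so the two algebras have the same universal
property and the canonical morphisms between them are mutually inverse.
-/

section Generalities

variable {R A B M : Type*} [CommSemiring R] [Semiring A] [Algebra R A] [Semiring B] [Algebra R B]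
  [Monoid M]

theorem adjoin_range_mkAlgHom_ι {ι : Type*} (rel : FreeAlgebra R ι → FreeAlgebra R ι → Prop) :
    Algebra.adjoin R (Set.range fun i => RingQuot.mkAlgHom R rel (FreeAlgebra.ι R i)) = ⊤ := by
  rw [Set.range_comp' (RingQuot.mkAlgHom R rel) (FreeAlgebra.ι R), ← AlgHom.map_adjoin,
    FreeAlgebra.adjoin_range_ι, Algebra.map_top, AlgHom.range_eq_top]
  exact RingQuot.mkAlgHom_surjective R rel

theorem semiconjBy_of_adjoin_eq_top {S : Set A} (hS : Algebra.adjoin R S = ⊤) {φ ψ : A →ₐ[R] B}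
    {u : B} (h : ∀ x ∈ S, SemiconjBy u (φ x) (ψ x)) (x : A) : SemiconjBy u (φ x) (ψ x) := by
  have hx : x ∈ Algebra.adjoin R S := hS ▸ Algebra.mem_top
  induction hx using Algebra.adjoin_induction with
  | mem x hx => exact h x hx
  | algebraMap z =>
    rw [AlgHom.commutes, AlgHom.commutes]
    exact Algebra.commute_algebraMap_right z u
  | add x y _ _ hx hy => simpa only [map_add] using hx.add_right hy
  | mul x y _ _ hx hy => simpa only [map_mul] using hx.mul_right hy

theorem semiconjBy_zpow_apply {σ : A ≃ₐ[R] A} {φ : A →ₐ[R] B} {u : Bˣ}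
    (h : ∀ x, SemiconjBy (u : B) (φ x) (φ (σ x))) (n : ℤ) (x : A) :
    SemiconjBy ((u ^ n : Bˣ) : B) (φ x) (φ ((σ ^ n) x)) := by
  have h_inv (x : A) : SemiconjBy (↑u⁻¹ : B) (φ x) (φ (σ⁻¹ x)) := by
    have := (h (σ⁻¹ x)).units_inv_symm_left
    rwa [← AlgEquiv.mul_apply, mul_inv_cancel, AlgEquiv.one_apply] at this
  induction n generalizing x with
  | zero => simp
  | succ n ih =>
    rw [zpow_add_one, zpow_add_one, Units.val_mul, AlgEquiv.mul_apply]
    exact (ih (σ x)).mul_left (h x)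
  | pred n ih =>
    rw [zpow_sub_one, zpow_sub_one, Units.val_mul, AlgEquiv.mul_apply]
    exact (ih (σ⁻¹ x)).mul_left (h_inv x)

theorem val_zpow_eq_pow_toNat_mul_inv_pow_toNat (u : Mˣ) (m : ℤ) :
    ((u ^ m : Mˣ) : M) = (u : M) ^ m.toNat * (↑u⁻¹ : M) ^ (-m).toNat := by
  obtain ⟨n, rfl | rfl⟩ := m.eq_nat_or_neg
  · simp
  · simp [← inv_pow]

end Generalities

section SkewLaurentPolynomial

variable {R A B : Type*} [CommSemiring R]

/-- The skew Laurent polynomial algebra `A[T, T⁻¹; σ]`, that is the cross product of `A` with the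
group algebra of `ℤ` acting through the powers of `σ`. It is a type synonym of a skew monoid
algebra: `σ` enters only through the multiplication. -/
def SkewLaurentPolynomial [Semiring A] [Algebra R A] (_σ : A ≃ₐ[R] A) : Type _ :=
  SkewMonoidAlgebra A (Multiplicative ℤ)

namespace SkewLaurentPolynomial

/-- The action of `ℤ` on `A` through the powers of `σ`, which twists the multiplication of
`SkewLaurentPolynomial σ`. -/
abbrev zpowAction [Semiring A] [Algebra R A] (σ : A ≃ₐ[R] A) :
    MulSemiringAction (Multiplicative ℤ) A :=
  MulSemiringAction.compHom A (zpowersHom (A ≃ₐ[R] A) σ)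

theorem zpowAction_smulCommClass [Semiring A] [Algebra R A] (σ : A ≃ₐ[R] A) :
    letI := zpowAction σ
    SMulCommClass (Multiplicative ℤ) R A :=
  letI := zpowAction σ
  ⟨fun n z x => map_smul (zpowersHom (A ≃ₐ[R] A) σ n) z x⟩

instance [Semiring A] [Algebra R A] (σ : A ≃ₐ[R] A) : Semiring (SkewLaurentPolynomial σ) :=
  letI := zpowAction σ
  (inferInstance : Semiring (SkewMonoidAlgebra A (Multiplicative ℤ)))

variable [Semiring A] [Algebra R A] [Semiring B] [Algebra R B] (σ : A ≃ₐ[R] A)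

instance : Algebra R (SkewLaurentPolynomial σ) :=
  letI := zpowAction σ
  haveI := zpowAction_smulCommClass σ
  (inferInstance : Algebra R (SkewMonoidAlgebra A (Multiplicative ℤ)))

/-- The monomial `x Tⁿ`, the element `x ⊗ fⁿ` of the cross product. -/
def monomial (n : ℤ) (x : A) : SkewLaurentPolynomial σ :=
  SkewMonoidAlgebra.single (Multiplicative.ofAdd n) x

theorem monomial_zero_one : monomial σ 0 1 = 1 := rfl

theorem monomial_mul_monomial (m n : ℤ) (x y : A) :
    monomial σ m x * monomial σ n y = monomial σ (m + n) (x * (σ ^ m) y) :=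
  letI := zpowAction σ
  SkewMonoidAlgebra.single_mul_single

/-- The linear identification of finitely supported families of coefficients with skew Laurent
polynomials. -/
def ofFinsupp : (ℤ →₀ A) ≃ₗ[R] SkewLaurentPolynomial σ :=
  Finsupp.domLCongr Multiplicative.ofAdd ≪≫ₗ SkewMonoidAlgebra.coeffLinearEquiv.symm

theorem ofFinsupp_single (n : ℤ) (x : A) :
    ofFinsupp σ (Finsupp.single n x) = monomial σ n x := by
  exact congrArg SkewMonoidAlgebra.ofCoeff (Finsupp.domLCongr_single Multiplicative.ofAdd n x)

/-- The inclusion of the coefficient algebra as the constant skew Laurent polynomials. -/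
def C : A →ₐ[R] SkewLaurentPolynomial σ :=
  letI := zpowAction σ
  { SkewMonoidAlgebra.singleOneRingHom with
    commutes' _ := rfl }

theorem C_apply (x : A) : C σ x = monomial σ 0 x := rfl

/-- The variable, as a unit; it is the element `1 ⊗ f` of the cross product. -/
def T : (SkewLaurentPolynomial σ)ˣ where
  val := monomial σ 1 1
  inv := monomial σ (-1) 1
  val_inv := by simp [monomial_mul_monomial, monomial_zero_one]
  inv_val := by simp [monomial_mul_monomial, monomial_zero_one]

theorem val_T : (T σ : SkewLaurentPolynomial σ) = monomial σ 1 1 := rfl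

theorem T_zpow (n : ℤ) : ((T σ ^ n : (SkewLaurentPolynomial σ)ˣ) : SkewLaurentPolynomial σ) =
    monomial σ n 1 := by
  induction n with
  | zero => simp [monomial_zero_one]
  | succ n ih => rw [zpow_add_one, Units.val_mul, ih]; simp [val_T, monomial_mul_monomial]
  | pred n ih =>
    rw [zpow_sub_one, Units.val_mul, ih]; simp [T, monomial_mul_monomial, sub_eq_add_neg]

theorem C_mul_T_zpow (n : ℤ) (x : A) : C σ x * ↑(T σ ^ n) = monomial σ n x := by
  simp [C_apply, T_zpow, monomial_mul_monomial]

theorem semiconjBy_T_C (x : A) :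
    SemiconjBy (T σ : SkewLaurentPolynomial σ) (C σ x) (C σ (σ x)) := by
  simp [SemiconjBy, C_apply, val_T, monomial_mul_monomial]

variable {σ}

theorem algHom_ext {φ ψ : SkewLaurentPolynomial σ →ₐ[R] B} (hC : φ.comp (C σ) = ψ.comp (C σ))
    (hT : φ (T σ) = ψ (T σ)) : φ = ψ := by
  have hT_zpow (n : ℤ) : φ ↑(T σ ^ n) = ψ ↑(T σ ^ n) := by
    have hT_units : Units.map (φ : _ →* B) (T σ) = Units.map (ψ : _ →* B) (T σ) := Units.ext hT
    have hT_units_zpow := congrArg (· ^ n) hT_units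
    simp only [← map_zpow] at hT_units_zpow
    exact congrArg Units.val hT_units_zpow
  have h_comp : φ.toLinearMap ∘ₗ ofFinsupp σ = ψ.toLinearMap ∘ₗ ofFinsupp σ :=
    Finsupp.lhom_ext fun n x => by
      have hCx : φ (C σ x) = ψ (C σ x) := DFunLike.congr_fun hC x
      change φ (ofFinsupp σ (Finsupp.single n x)) = ψ (ofFinsupp σ (Finsupp.single n x))
      rw [ofFinsupp_single, ← C_mul_T_zpow, map_mul, map_mul, hCx, hT_zpow]
  ext p
  obtain ⟨q, rfl⟩ := (ofFinsupp σ).surjective p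
  exact LinearMap.congr_fun h_comp q

/-- The algebra morphism extending `φ` and sending the variable to `u`, which exists as soon as
conjugation by `u` implements `σ`. -/
def lift (φ : A →ₐ[R] B) (u : Bˣ) (h : ∀ x, SemiconjBy (u : B) (φ x) (φ (σ x))) :
    SkewLaurentPolynomial σ →ₐ[R] B :=
  letI := zpowAction σ
  haveI := zpowAction_smulCommClass σ
  SkewMonoidAlgebra.liftNCAlgHom φ ((Units.coeHom B).comp (zpowersHom Bˣ u))
    (fun {x n} => (semiconjBy_zpow_apply h n.toAdd x).eq.symm)

theorem lift_monomial (φ : A →ₐ[R] B) (u : Bˣ) (h : ∀ x, SemiconjBy (u : B) (φ x) (φ (σ x)))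
    (n : ℤ) (x : A) : lift φ u h (monomial σ n x) = φ x * ↑(u ^ n) :=
  SkewMonoidAlgebra.liftNC_single _ _ _ _

theorem lift_C (φ : A →ₐ[R] B) (u : Bˣ) (h : ∀ x, SemiconjBy (u : B) (φ x) (φ (σ x))) (x : A) :
    lift φ u h (C σ x) = φ x := by
  simp [C_apply, lift_monomial]

theorem lift_T (φ : A →ₐ[R] B) (u : Bˣ) (h : ∀ x, SemiconjBy (u : B) (φ x) (φ (σ x))) :
    lift φ u h (T σ) = u := by
  simp [val_T, lift_monomial]

end SkewLaurentPolynomial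

end SkewLaurentPolynomial

section QuantumMatrix

variable {K B E : Type*} [Field K] [Semiring B] [Algebra K B] [Semiring E] [Algebra K E]

/-- A quantum matrix with entries in `B`: a quadruple satisfying the relations of `GL_r(2)`,
equivalently (for `K = ℂ`) an algebra morphism from `GL_r(2)` to `B`. The last relation is stated
without subtraction, so that `B` can be a semiring. -/
structure IsQuantumMatrix (r : K) (v : Gen4 → B) : Prop where
  ab : v .a * v .b = r⁻¹ • (v .b * v .a)
  bd : v .b * v .d = r⁻¹ • (v .d * v .b)
  ac : v .a * v .c = r⁻¹ • (v .c * v .a)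
  cd : v .c * v .d = r⁻¹ • (v .d * v .c)
  bc : v .b * v .c = v .c * v .b
  ad : v .a * v .d = (r⁻¹ - r) • (v .b * v .c) + v .d * v .a

/-- The degree of a generator in the `ℤ`-grading of `GL_r(2)`: `f` scales `g` by `s ^ weight g`. -/
def weight : Gen4 → ℤ
  | .a => 0
  | .b => 1
  | .c => -1
  | .d => 0

namespace IsQuantumMatrix

variable {r : K} {v : Gen4 → B}

theorem map (hv : IsQuantumMatrix r v) (φ : B →ₐ[K] E) : IsQuantumMatrix r fun g => φ (v g) where
  ab := by simpa only [map_mul, map_smul] using congrArg φ hv.ab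
  bd := by simpa only [map_mul, map_smul] using congrArg φ hv.bd
  ac := by simpa only [map_mul, map_smul] using congrArg φ hv.ac
  cd := by simpa only [map_mul, map_smul] using congrArg φ hv.cd
  bc := by simpa only [map_mul] using congrArg φ hv.bc
  ad := by simpa only [map_add, map_mul, map_smul] using congrArg φ hv.ad

theorem zpow_weight_smul (hv : IsQuantumMatrix r v) (t : Kˣ) :
    IsQuantumMatrix r fun g => t ^ weight g • v g where
  ab := by simp [weight, hv.ab, Units.smul_def, smul_smul, mul_comm]
  bd := by simp [weight, hv.bd, Units.smul_def, smul_smul, mul_comm]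
  ac := by simp [weight, hv.ac, Units.smul_def, smul_smul, mul_comm]
  cd := by simp [weight, hv.cd, Units.smul_def, smul_smul, mul_comm]
  bc := by simp [weight, hv.bc, Units.smul_def, smul_smul]
  ad := by simp [weight, hv.ad, Units.smul_def, smul_smul]

end IsQuantumMatrix

end QuantumMatrix

namespace GL2

variable {r : ℂ} {B : Type*} [Semiring B] [Algebra ℂ B]

theorem isQuantumMatrix_gen4 (r : ℂ) : IsQuantumMatrix r (gen4 r) where
  ab := by simpa [gen4] using RingQuot.mkAlgHom_rel ℂ (GLRel.ab (r := r))
  bd := by simpa [gen4] using RingQuot.mkAlgHom_rel ℂ (GLRel.bd (r := r))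
  ac := by simpa [gen4] using RingQuot.mkAlgHom_rel ℂ (GLRel.ac (r := r))
  cd := by simpa [gen4] using RingQuot.mkAlgHom_rel ℂ (GLRel.cd (r := r))
  bc := by simpa [gen4] using RingQuot.mkAlgHom_rel ℂ (GLRel.bc (r := r))
  ad := sub_eq_iff_eq_add.mp <| by
    simpa [gen4] using RingQuot.mkAlgHom_rel ℂ (GLRel.ad (r := r))

theorem adjoin_range_gen4 (r : ℂ) : Algebra.adjoin ℂ (Set.range (gen4 r)) = ⊤ :=
  adjoin_range_mkAlgHom_ι (GLRel r)

theorem algHom_ext {φ ψ : GL2 r →ₐ[ℂ] B} (h : ∀ g, φ (gen4 r g) = ψ (gen4 r g)) :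
    φ = ψ :=
  AlgHom.ext_of_adjoin_eq_top (adjoin_range_gen4 r) (Set.forall_mem_range.mpr h)

/-- The algebra morphism from `GL_r(2)` given by a quantum matrix. -/
def lift {v : Gen4 → B} (hv : IsQuantumMatrix r v) : GL2 r →ₐ[ℂ] B :=
  RingQuot.liftAlgHom ℂ ⟨FreeAlgebra.lift ℂ v, by
    let _ : Ring B := Algebra.semiringToRing ℂ
    rintro _ _ (_ | _) <;> simp [Y, hv.ab, hv.bd, hv.ac, hv.cd, hv.bc, hv.ad]⟩

theorem lift_gen4 {v : Gen4 → B} (hv : IsQuantumMatrix r v) (g : Gen4) :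
    lift hv (gen4 r g) = v g := by
  simp [lift, gen4, Y]

/-- The endomorphism of `GL_r(2)` which scales each generator `g` by `t ^ weight g`. -/
def rescale (r : ℂ) (t : ℂˣ) : GL2 r →ₐ[ℂ] GL2 r :=
  lift ((isQuantumMatrix_gen4 r).zpow_weight_smul t)

theorem rescale_gen4 (r : ℂ) (t : ℂˣ) (g : Gen4) :
    rescale r t (gen4 r g) = t ^ weight g • gen4 r g :=
  lift_gen4 _ g

theorem rescale_comp_rescale (r : ℂ) (t u : ℂˣ) :
    (rescale r t).comp (rescale r u) = rescale r (t * u) :=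
  algHom_ext fun g => by
    simp only [AlgHom.comp_apply, rescale_gen4, Units.smul_def, map_smul, smul_smul, mul_zpow,
      Units.val_mul, mul_comm]

theorem rescale_one (r : ℂ) : rescale r 1 = AlgHom.id ℂ (GL2 r) :=
  algHom_ext fun g => by simp [rescale_gen4]

/-- The action of the group-like element `f` on `GL_r(2)`. -/
def fAction (r : ℂ) (s : ℂˣ) : GL2 r ≃ₐ[ℂ] GL2 r :=
  AlgEquiv.ofAlgHom (rescale r s) (rescale r s⁻¹)
    (by rw [rescale_comp_rescale, mul_inv_cancel, rescale_one])
    (by rw [rescale_comp_rescale, inv_mul_cancel, rescale_one])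

theorem fAction_gen4 (r : ℂ) (s : ℂˣ) (g : Gen4) :
    fAction r s (gen4 r g) = s ^ weight g • gen4 r g :=
  rescale_gen4 r s g

theorem semiconjBy_fAction {s : ℂˣ} {φ : GL2 r →ₐ[ℂ] B} {u : B}
    (h : ∀ g, SemiconjBy u (φ (gen4 r g)) (s ^ weight g • φ (gen4 r g))) (x : GL2 r) :
    SemiconjBy u (φ x) (φ (fAction r s x)) := by
  refine semiconjBy_of_adjoin_eq_top (ψ := φ.comp (fAction r s : GL2 r →ₐ[ℂ] GL2 r))
    (adjoin_range_gen4 r) (Set.forall_mem_range.mpr fun g => ?_) x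
  simpa [fAction_gen4, Units.smul_def] using h g

end GL2

/-- The generator of `A_{r,s}` corresponding to a generator of `GL_r(2)`. -/
def Gen4.toGen : Gen4 → Gen
  | .a => .a
  | .b => .b
  | .c => .c
  | .d => .d

namespace Ars

section Relations

variable (r s : ℂ)

theorem isQuantumMatrix_gen : IsQuantumMatrix r fun g : Gen4 => gen r s g.toGen where
  ab := by simpa [gen, Gen4.toGen] using RingQuot.mkAlgHom_rel ℂ (ArsRel.ab (r := r) (s := s))
  bd := by simpa [gen, Gen4.toGen] using RingQuot.mkAlgHom_rel ℂ (ArsRel.bd (r := r) (s := s))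
  ac := by simpa [gen, Gen4.toGen] using RingQuot.mkAlgHom_rel ℂ (ArsRel.ac (r := r) (s := s))
  cd := by simpa [gen, Gen4.toGen] using RingQuot.mkAlgHom_rel ℂ (ArsRel.cd (r := r) (s := s))
  bc := by simpa [gen, Gen4.toGen] using RingQuot.mkAlgHom_rel ℂ (ArsRel.bc (r := r) (s := s))
  ad := sub_eq_iff_eq_add.mp <| by
    simpa [gen, Gen4.toGen] using RingQuot.mkAlgHom_rel ℂ (ArsRel.ad (r := r) (s := s))

/-- The generator `f`, as a unit of `A_{r,s}`. -/
def fUnit : (Ars r s)ˣ where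
  val := gen r s .f
  inv := gen r s .fi
  val_inv := by simpa [gen] using RingQuot.mkAlgHom_rel ℂ (ArsRel.ffi (r := r) (s := s))
  inv_val := by simpa [gen] using RingQuot.mkAlgHom_rel ℂ (ArsRel.fif (r := r) (s := s))

theorem val_fUnit_zpow (m : ℤ) : ((fUnit r s ^ m : (Ars r s)ˣ) : Ars r s) =
    gen r s .f ^ m.toNat * gen r s .fi ^ (-m).toNat :=
  val_zpow_eq_pow_toNat_mul_inv_pow_toNat (fUnit r s) m

/-- The canonical morphism from `GL_r(2)` to `A_{r,s}`. -/
def ofGL2 : GL2 r →ₐ[ℂ] Ars r s :=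
  GL2.lift (isQuantumMatrix_gen r s)

theorem ofGL2_gen4 (g : Gen4) : ofGL2 r s (gen4 r g) = gen r s g.toGen :=
  GL2.lift_gen4 _ g

end Relations

variable {r : ℂ} {s : ℂˣ} {B : Type*} [Semiring B] [Algebra ℂ B]

theorem semiconjBy_f_gen (r : ℂ) (s : ℂˣ) (g : Gen4) :
    SemiconjBy (gen r s .f) (gen r s g.toGen) (s ^ weight g • gen r s g.toGen) := by
  have haf := RingQuot.mkAlgHom_rel ℂ (ArsRel.af (r := r) (s := s))
  have hbf := RingQuot.mkAlgHom_rel ℂ (ArsRel.bf (r := r) (s := s))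
  have hcf := RingQuot.mkAlgHom_rel ℂ (ArsRel.cf (r := r) (s := s))
  have hdf := RingQuot.mkAlgHom_rel ℂ (ArsRel.df (r := r) (s := s))
  simp only [map_mul, map_smul] at haf hbf hcf hdf
  cases g <;>
    simp [SemiconjBy, gen, Gen4.toGen, weight, Units.smul_def, haf, hbf, hcf, hdf, smul_smul]

theorem semiconjBy_f_ofGL2 (r : ℂ) (s : ℂˣ) (x : GL2 r) :
    SemiconjBy (fUnit r s : Ars r s) (ofGL2 r s x) (ofGL2 r s (GL2.fAction r s x)) :=
  GL2.semiconjBy_fAction (fun g => by rw [ofGL2_gen4]; exact semiconjBy_f_gen r s g) x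

theorem algHom_ext {s : ℂ} {φ ψ : Ars r s →ₐ[ℂ] B}
    (hGL : φ.comp (ofGL2 r s) = ψ.comp (ofGL2 r s)) (hf : φ (fUnit r s) = ψ (fUnit r s)) :
    φ = ψ := by
  have h_gen (g : Gen4) : φ (gen r s g.toGen) = ψ (gen r s g.toGen) := by
    simpa only [← ofGL2_gen4, AlgHom.comp_apply] using DFunLike.congr_fun hGL (gen4 r g)
  have h_inv : φ ↑(fUnit r s)⁻¹ = ψ ↑(fUnit r s)⁻¹ := by
    have h_units : Units.map (φ : _ →* B) (fUnit r s) = Units.map (ψ : _ →* B) (fUnit r s) :=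
      Units.ext hf
    exact congrArg Units.inv h_units
  refine AlgHom.ext_of_adjoin_eq_top (adjoin_range_mkAlgHom_ι (ArsRel r s))
    (Set.forall_mem_range.mpr fun g => ?_)
  cases g with
  | a => exact h_gen .a
  | b => exact h_gen .b
  | c => exact h_gen .c
  | d => exact h_gen .d
  | f => exact hf
  | fi => exact h_inv

/-- The images of the generators of `A_{r,s}` under the morphism `Ars.lift`. -/
def genImage (v : Gen4 → B) (u : Bˣ) : Gen → B
  | .a => v .a
  | .b => v .b
  | .c => v .c
  | .d => v .d
  | .f => u
  | .fi => ↑u⁻¹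

/-- The algebra morphism from `A_{r,s}` given by a quantum matrix and a unit whose conjugation
scales the entries by their weights. -/
def lift {v : Gen4 → B} {u : Bˣ} (hv : IsQuantumMatrix r v)
    (hu : ∀ g, SemiconjBy (u : B) (v g) (s ^ weight g • v g)) : Ars r s →ₐ[ℂ] B :=
  RingQuot.liftAlgHom ℂ ⟨FreeAlgebra.lift ℂ (genImage v u), by
    let _ : Ring B := Algebra.semiringToRing ℂ
    have hua : u * v .a = v .a * u := by simpa [weight] using (hu .a).eq
    have hub : u * v .b = (s : ℂ) • (v .b * u) := by
      simpa [weight, Units.smul_def] using (hu .b).eq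
    have huc : u * v .c = (s : ℂ)⁻¹ • (v .c * u) := by
      simpa [weight, Units.smul_def] using (hu .c).eq
    have hud : u * v .d = v .d * u := by simpa [weight] using (hu .d).eq
    rintro _ _ (_ | _) <;>
      simp [X, genImage, hv.ab, hv.bd, hv.ac, hv.cd, hv.bc, hv.ad, hua, hub, huc, hud, smul_smul]⟩

variable {v : Gen4 → B} {u : Bˣ} (hv : IsQuantumMatrix r v)
    (hu : ∀ g, SemiconjBy (u : B) (v g) (s ^ weight g • v g))

theorem lift_ofGL2_gen4 (g : Gen4) : lift hv hu (ofGL2 r s (gen4 r g)) = v g := by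
  cases g <;> simp [ofGL2_gen4, lift, gen, X, Gen4.toGen, genImage]

theorem lift_fUnit : lift hv hu (fUnit r s) = u := by
  simp [lift, fUnit, gen, X, genImage]

end Ars

section CrossProduct

open SkewLaurentPolynomial

variable (r : ℂ) (s : ℂˣ)

/-- The canonical morphism `GL_r(2) ⋊ H → A_{r,s}`, sending `x ⊗ fⁿ` to `x fⁿ`. -/
def skewLaurentToArs : SkewLaurentPolynomial (GL2.fAction r s) →ₐ[ℂ] Ars r s :=
  lift (Ars.ofGL2 r s) (Ars.fUnit r s) (Ars.semiconjBy_f_ofGL2 r s)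

theorem semiconjBy_T_C_gen4 (g : Gen4) :
    SemiconjBy (T (GL2.fAction r s) : SkewLaurentPolynomial (GL2.fAction r s))
      (C (GL2.fAction r s) (gen4 r g)) (s ^ weight g • C (GL2.fAction r s) (gen4 r g)) := by
  simpa [GL2.fAction_gen4, Units.smul_def] using semiconjBy_T_C (GL2.fAction r s) (gen4 r g)

/-- The canonical morphism `A_{r,s} → GL_r(2) ⋊ H`, sending each generator to its namesake. -/
def arsToSkewLaurent : Ars r s →ₐ[ℂ] SkewLaurentPolynomial (GL2.fAction r s) :=
  Ars.lift ((GL2.isQuantumMatrix_gen4 r).map (C (GL2.fAction r s))) (semiconjBy_T_C_gen4 r s)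

theorem skewLaurentToArs_comp_arsToSkewLaurent :
    (skewLaurentToArs r s).comp (arsToSkewLaurent r s) = AlgHom.id ℂ (Ars r s) :=
  Ars.algHom_ext
    (GL2.algHom_ext fun g => by
      simp [skewLaurentToArs, arsToSkewLaurent, Ars.lift_ofGL2_gen4, lift_C])
    (by simp [skewLaurentToArs, arsToSkewLaurent, Ars.lift_fUnit, lift_T])

theorem arsToSkewLaurent_comp_skewLaurentToArs :
    (arsToSkewLaurent r s).comp (skewLaurentToArs r s) = AlgHom.id ℂ _ :=
  SkewLaurentPolynomial.algHom_ext
    (GL2.algHom_ext fun g => by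
      simp [skewLaurentToArs, arsToSkewLaurent, Ars.lift_ofGL2_gen4, lift_C])
    (by simp [skewLaurentToArs, arsToSkewLaurent, Ars.lift_fUnit, lift_T])

/-- The identification `GL_r(2) ⋊ H ≅ A_{r,s}`. -/
def skewLaurentEquivArs : SkewLaurentPolynomial (GL2.fAction r s) ≃ₐ[ℂ] Ars r s :=
  AlgEquiv.ofAlgHom (skewLaurentToArs r s) (arsToSkewLaurent r s)
    (skewLaurentToArs_comp_arsToSkewLaurent r s) (arsToSkewLaurent_comp_skewLaurentToArs r s)

theorem skewLaurentEquivArs_monomial (m : ℤ) (x : GL2 r) :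
    skewLaurentEquivArs r s (monomial _ m x) = Ars.ofGL2 r s x * ↑(Ars.fUnit r s ^ m) :=
  lift_monomial _ _ (Ars.semiconjBy_f_ofGL2 r s) m x

end CrossProduct

/-- `GL_r(2)` is a left module algebra over the Hopf algebra `H = ℂ[f,f⁻¹]`
(the group algebra of `ℤ`, with `f` group-like) under the action
`f ▷ a = a`, `f ▷ b = s b`, `f ▷ c = s⁻¹ c`, `f ▷ d = d`: the action of `f` is by an
algebra automorphism `σ` (so `f ▷ (xy) = (f ▷ x)(f ▷ y)` and `f ▷ 1 = 1`), and the
cross product `GL_r(2) ⋊ H` is precisely `A_{r,s}`: the map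
`Σ_n x_n ⊗ f^n ↦ Σ_n x_n f^n` from `GL_r(2) ⊗ ℂ[ℤ] ≅ (ℤ →₀ GL_r(2))` to `A_{r,s}`
is an additive ℂ-linear bijection carrying the cross-product multiplication
`(x ⊗ f^m)(y ⊗ f^n) = x (f^m ▷ y) ⊗ f^{m+n} = x σ^m(y) ⊗ f^{m+n}` to the
multiplication of `A_{r,s}`. -/
theorem stmt16 (r s : ℂ) (hr : r ≠ 0) (hs : s ≠ 0) :
    ∃ σ : GL2 r ≃ₐ[ℂ] GL2 r,
      σ (gen4 r .a) = gen4 r .a ∧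
      σ (gen4 r .b) = s • gen4 r .b ∧
      σ (gen4 r .c) = s⁻¹ • gen4 r .c ∧
      σ (gen4 r .d) = gen4 r .d ∧
      (∀ x y : GL2 r, σ (x * y) = σ x * σ y) ∧
      σ 1 = 1 ∧
      ∃ Φ : (ℤ →₀ GL2 r) → Ars r s,
        Function.Bijective Φ ∧
        (∀ p q : ℤ →₀ GL2 r, Φ (p + q) = Φ p + Φ q) ∧
        (∀ (z : ℂ) (p : ℤ →₀ GL2 r), Φ (z • p) = z • Φ p) ∧
        Φ (Finsupp.single 0 1) = 1 ∧
        (∀ m : ℤ, Φ (Finsupp.single m 1) = gen r s .f ^ m.toNat * gen r s .fi ^ (-m).toNat) ∧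
        (∀ (m n : ℤ) (x y : GL2 r),
          Φ (Finsupp.single m x) * Φ (Finsupp.single n y) =
            Φ (Finsupp.single (m + n) (x * (σ ^ m) y))) := by
  lift s to ℂˣ using hs.isUnit
  let σ := GL2.fAction r s
  let Φ := (SkewLaurentPolynomial.ofFinsupp σ).trans (skewLaurentEquivArs r s).toLinearEquiv
  have hΦ (m : ℤ) (x : GL2 r) :
      Φ (Finsupp.single m x) = skewLaurentEquivArs r s (SkewLaurentPolynomial.monomial σ m x) :=
    congrArg (skewLaurentEquivArs r s) (SkewLaurentPolynomial.ofFinsupp_single σ m x)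
  refine ⟨σ, ?_, ?_, ?_, ?_, map_mul σ, map_one σ, Φ, Φ.bijective, map_add Φ, map_smul Φ, ?_,
    fun m => ?_, fun m n x y => ?_⟩
  · simp [σ, GL2.fAction_gen4, weight]
  · simp [σ, GL2.fAction_gen4, weight, Units.smul_def]
  · simp [σ, GL2.fAction_gen4, weight, Units.smul_def]
  · simp [σ, GL2.fAction_gen4, weight]
  · rw [hΦ, SkewLaurentPolynomial.monomial_zero_one, map_one]
  · rw [hΦ, skewLaurentEquivArs_monomial, map_one, one_mul, Ars.val_fUnit_zpow]
  · rw [hΦ, hΦ, hΦ, ← map_mul, SkewLaurentPolynomial.monomial_mul_monomial]
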